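/- Suppose sup_n ‖z_n‖ < ∞ and that the residuals satisfy sup_{k ≥ 0} ‖δ_{n,n+k}‖ → 0 as n → ∞, where δ_{n,n+k} := z_{n+k} − z_n − Σ_{j=0}^{k−1} a(n+j)·q(z_{n+j}). Then for every T > 0: lim_{s → ∞} sup_{t ∈ [max(0, s−T), s]} ‖z̄(t) − z_s(t)‖ = 0, where z_s is the backward solution of the limiting ODE ending at the interpolated trajectory at time s. -/

import Mathlib

open MeasureTheory Finset Filter

/-!
The interpolation `zbar` is not itself an approximate solution of the ODE: its slopes
`(z (n + 1) - z n) / a n` contain the residual noise divided by the step size. Its Euler part is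
one, though. Split `z n = y n + r n`, where `y n = ∑ m < n, a m • q (z m)`. The hypothesis on the
residuals says that `r` is a Cauchy sequence, so on a late time window the interpolation of `r` is
constant up to `2 * η`. Hence the interpolation of `y`, translated to agree with `zbar` at the
terminal time `s`, stays `2 * η`-close to `zbar`. Its slope on the `n`-th mesh interval is exactly
`q (z n)`, and late steps of `z` have size at most `η`, so it solves the ODE up to an error
`3 * K * η`. Grönwall's inequality, run backwards from `s`, finishes the proof.
-/

section

open Set Topology
open scoped NNReal

variable {E : Type*} [NormedAddCommGroup E] [NormedSpace ℝ E]

lemma gronwallBound_zero_mul (K c x : ℝ) :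
    gronwallBound 0 K (K * c) x = c * (Real.exp (K * x) - 1) := by
  rcases eq_or_ne K 0 with rfl | hK
  · simp [gronwallBound_K0]
  · simp [gronwallBound_of_K_ne_0 hK, mul_div_cancel_left₀ c hK]

lemma hasDerivWithinAt_Ici_comp_neg {f : ℝ → E} {f' : E} {x : ℝ}
    (hf : HasDerivWithinAt f f' (Iic (-x)) (-x)) :
    HasDerivWithinAt (fun y ↦ f (-y)) (-f') (Ici x) x := by
  simpa [Function.comp_def] using
    hf.scomp x (hasDerivWithinAt_neg x (Ici x)) fun _ hy ↦ mem_Iic.2 (neg_le_neg hy)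

theorem dist_le_of_approx_trajectories_ODE_left {v : ℝ → E → E} {K : ℝ≥0}
    {f f' g g' : ℝ → E} {a b εf εg δ : ℝ} (hv : ∀ x, LipschitzWith K (v x))
    (hf : ContinuousOn f (Icc a b))
    (hf' : ∀ x ∈ Ioc a b, HasDerivWithinAt f (f' x) (Iic x) x)
    (f_bound : ∀ x ∈ Ioc a b, dist (f' x) (v x (f x)) ≤ εf)
    (hg : ContinuousOn g (Icc a b))
    (hg' : ∀ x ∈ Ioc a b, HasDerivWithinAt g (g' x) (Iic x) x)
    (g_bound : ∀ x ∈ Ioc a b, dist (g' x) (v x (g x)) ≤ εg)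
    (hb : dist (f b) (g b) ≤ δ) :
    ∀ x ∈ Icc a b, dist (f x) (g x) ≤ gronwallBound δ K (εf + εg) (b - x) := by
  have neg_mem_Ioc {y : ℝ} (hy : y ∈ Ico (-b) (-a)) : -y ∈ Ioc a b :=
    ⟨lt_neg_of_lt_neg hy.2, neg_le.1 hy.1⟩
  have mapsTo_neg : MapsTo Neg.neg (Icc (-b) (-a)) (Icc a b) := fun y hy ↦
    ⟨le_neg_of_le_neg hy.2, neg_le.1 hy.1⟩
  intro x hx
  have reversed := dist_le_of_approx_trajectories_ODE
    (v := fun y w ↦ -v (-y) w) (f := fun y ↦ f (-y)) (g := fun y ↦ g (-y))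
    (fun y ↦ (hv (-y)).neg)
    (hf.comp continuous_neg.continuousOn mapsTo_neg)
    (fun y hy ↦ hasDerivWithinAt_Ici_comp_neg (hf' (-y) (neg_mem_Ioc hy)))
    (fun y hy ↦ (dist_neg_neg _ _).trans_le (f_bound (-y) (neg_mem_Ioc hy)))
    (hg.comp continuous_neg.continuousOn mapsTo_neg)
    (fun y hy ↦ hasDerivWithinAt_Ici_comp_neg (hg' (-y) (neg_mem_Ioc hy)))
    (fun y hy ↦ (dist_neg_neg _ _).trans_le (g_bound (-y) (neg_mem_Ioc hy)))
    (by simpa only [neg_neg] using hb) (-x) ⟨neg_le_neg hx.2, neg_le_neg hx.1⟩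
  simpa only [neg_neg, sub_neg_eq_add, neg_add_eq_sub] using reversed

lemma exists_mem_Ioc_of_monotone {α : Type*} [LinearOrder α] {t : ℕ → α} (ht : Monotone t)
    {N M : ℕ} {x : α} (hx : x ∈ Ioc (t N) (t M)) :
    ∃ n ≥ N, x ∈ Ioc (t n) (t (n + 1)) := by
  rw [← ht.biUnion_Ico_Ioc_map_succ] at hx
  simp only [Order.succ_eq_add_one, mem_iUnion] at hx
  obtain ⟨n, hn, hxn⟩ := hx
  exact ⟨n, hn.1, hxn⟩

lemma sub_div_sub_mem_unitInterval {a b x : ℝ} (hx : x ∈ Icc a b) :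
    (x - a) / (b - a) ∈ unitInterval :=
  unitInterval.div_mem (sub_nonneg.2 hx.1) (sub_nonneg.2 (hx.1.trans hx.2))
    (sub_le_sub_right hx.2 a)

/-- `f` is a piecewise linear interpolation of the nodes `z n` placed at the times `t n`. This is a
predicate because it constrains `f` only on the mesh intervals. -/
def IsLinearInterpolation (t : ℕ → ℝ) (z : ℕ → E) (f : ℝ → E) : Prop :=
  ∀ n, ∀ x ∈ Icc (t n) (t (n + 1)),
    f x = z n + ((x - t n) / (t (n + 1) - t n)) • (z (n + 1) - z n)

namespace IsLinearInterpolation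

variable {t : ℕ → ℝ} {y z : ℕ → E} {f g : ℝ → E}

theorem exists_of_strictMono (ht : StrictMono t) (z : ℕ → E) :
    ∃ f, IsLinearInterpolation t z f := by
  let piece (n : ℕ) (x : ℝ) : E := z n + ((x - t n) / (t (n + 1) - t n)) • (z (n + 1) - z n)
  let index (x : ℝ) : ℕ := sInf {n | x ≤ t (n + 1)}
  refine ⟨fun x ↦ piece (index x) x, fun n x hx ↦ ?_⟩
  have index_le : index x ≤ n := Nat.sInf_le hx.2
  have le_index : x ≤ t (index x + 1) := Nat.sInf_mem (s := {n | x ≤ t (n + 1)}) ⟨n, hx.2⟩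
  change piece (index x) x = piece n x
  generalize index x = k at index_le le_index
  rcases index_le.eq_or_lt with rfl | k_lt
  · rfl
  · obtain rfl : k + 1 = n := le_antisymm k_lt (ht.le_iff_le.1 (hx.1.trans le_index))
    obtain rfl : x = t (k + 1) := le_antisymm le_index hx.1
    have width_ne : t (k + 1) - t k ≠ 0 := (sub_pos.2 (ht k.lt_succ_self)).ne'
    simp [piece, div_self width_ne]

lemma sub (hf : IsLinearInterpolation t z f) (hg : IsLinearInterpolation t y g) :
    IsLinearInterpolation t (z - y) (f - g) := fun n x hx ↦ by
  simp only [Pi.sub_apply, hf n x hx, hg n x hx]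
  module

lemma mem_of_convex (hf : IsLinearInterpolation t z f) (ht : Monotone t) {C : Set E}
    (hC : Convex ℝ C) {N M : ℕ} (hz : ∀ n ≥ N, z n ∈ C) {x : ℝ} (hx : x ∈ Ioc (t N) (t M)) :
    f x ∈ C := by
  obtain ⟨n, hn, hxn⟩ := exists_mem_Ioc_of_monotone ht hx
  rw [hf n x (Ioc_subset_Icc_self hxn)]
  exact hC.add_smul_sub_mem (hz n hn) (hz (n + 1) (hn.trans n.le_succ))
    (sub_div_sub_mem_unitInterval (Ioc_subset_Icc_self hxn))

lemma dist_le_two_mul_of_dist_node_le (hf : IsLinearInterpolation t z f) (ht : Monotone t)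
    {c : E} {η : ℝ} {N M : ℕ} (hz : ∀ n ≥ N, dist (z n) c ≤ η) {w x : ℝ} (hw : w ∈ Ioc (t N) (t M))
    (hx : x ∈ Ioc (t N) (t M)) : dist (f w) (f x) ≤ 2 * η := by
  have dist_center {x : ℝ} (hx : x ∈ Ioc (t N) (t M)) : dist (f x) c ≤ η :=
    Metric.mem_closedBall.1 (hf.mem_of_convex ht (convex_closedBall c η) hz hx)
  linarith [dist_triangle_right (f w) (f x) c, dist_center hw, dist_center hx]

lemma dist_node_le (hf : IsLinearInterpolation t z f) {n : ℕ} {x : ℝ}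
    (hx : x ∈ Icc (t n) (t (n + 1))) : dist (f x) (z n) ≤ dist (z (n + 1)) (z n) := by
  have weight := sub_div_sub_mem_unitInterval hx
  rw [dist_eq_norm, dist_eq_norm, hf n x hx, add_sub_cancel_left, norm_smul,
    Real.norm_of_nonneg weight.1]
  exact mul_le_of_le_one_left (norm_nonneg _) weight.2

lemma continuousOn (hf : IsLinearInterpolation t z f) (ht : Monotone t) (M : ℕ) :
    ContinuousOn f (Icc (t 0) (t M)) := by
  induction M with
  | zero => simp
  | succ n ih =>
    have last : ContinuousOn f (Icc (t n) (t (n + 1))) :=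
      ContinuousOn.congr (by fun_prop) (hf n)
    rw [← Icc_union_Icc_eq_Icc (ht n.zero_le) (ht n.le_succ)]
    exact ih.union_of_isClosed last isClosed_Icc isClosed_Icc

lemma hasDerivWithinAt_Iic (hf : IsLinearInterpolation t z f) {n : ℕ} {x : ℝ}
    (hx : x ∈ Ioc (t n) (t (n + 1))) :
    HasDerivWithinAt f ((t (n + 1) - t n)⁻¹ • (z (n + 1) - z n)) (Iic x) x := by
  have affine : HasDerivWithinAt
      (fun x ↦ z n + ((x - t n) / (t (n + 1) - t n)) • (z (n + 1) - z n))
      ((t (n + 1) - t n)⁻¹ • (z (n + 1) - z n)) (Iic x) x := by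
    simpa only [one_div, id] using ((((hasDerivWithinAt_id x (Iic x)).sub_const (t n)).div_const
      (t (n + 1) - t n)).smul_const (z (n + 1) - z n)).const_add (z n)
  refine affine.congr_of_eventuallyEq_of_mem ?_ self_mem_Iic
  filter_upwards [Icc_mem_nhdsLE hx.1] with w hw
  exact hf n w ⟨hw.1, hw.2.trans hx.2⟩

end IsLinearInterpolation

/-- The partial sums of the slopes `p` over the mesh `t`: the nodes of the polygonal path that
starts at `0` and has slope `p n` on the `n`-th mesh interval. With `p n = q (z n)` this is the
accumulated Euler drift along the iterates `z`. -/
def eulerSum (t : ℕ → ℝ) (p : ℕ → E) (n : ℕ) : E :=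
  ∑ m ∈ Finset.range n, (t (m + 1) - t m) • p m

lemma eulerSum_add (t : ℕ → ℝ) (p : ℕ → E) (n k : ℕ) :
    eulerSum t p (n + k) =
      eulerSum t p n + ∑ j ∈ Finset.range k, (t (n + j + 1) - t (n + j)) • p (n + j) :=
  sum_range_add _ n k

lemma sub_eulerSum_add_sub (t : ℕ → ℝ) (z p : ℕ → E) (n k : ℕ) :
    (z - eulerSum t p) (n + k) - (z - eulerSum t p) n =
      z (n + k) - z n - ∑ j ∈ Finset.range k, (t (n + j + 1) - t (n + j)) • p (n + j) := by
  simp only [Pi.sub_apply, eulerSum_add]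
  abel

lemma IsLinearInterpolation.hasDerivWithinAt_eulerSum {t : ℕ → ℝ} {p : ℕ → E} {f : ℝ → E}
    (hf : IsLinearInterpolation t (eulerSum t p) f) {n : ℕ} {x : ℝ}
    (hx : x ∈ Ioc (t n) (t (n + 1))) : HasDerivWithinAt f (p n) (Iic x) x := by
  have width_ne : t (n + 1) - t n ≠ 0 := (sub_pos.2 (hx.1.trans_le hx.2)).ne'
  simpa [eulerSum_add, smul_smul, inv_mul_cancel₀ width_ne] using hf.hasDerivWithinAt_Iic hx

section Tracking

variable {t : ℕ → ℝ} {z : ℕ → E} {zbar : ℝ → E} {q : E → E} {K : ℝ≥0} {N M : ℕ} {c : E}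
  {η s u : ℝ}

theorem IsLinearInterpolation.exists_approx_trajectory (ht : StrictMono t)
    (hzbar : IsLinearInterpolation t z zbar) (hq : LipschitzWith K q)
    (hres : ∀ n ≥ N, dist ((z - eulerSum t (q ∘ z)) n) c ≤ η)
    (hstep : ∀ n ≥ N, dist (z (n + 1)) (z n) ≤ η) (hu : t N < u) (hus : u ≤ s) (hs : s ≤ t M) :
    ∃ y y' : ℝ → E, y s = zbar s ∧ ContinuousOn y (Icc u s) ∧
      (∀ x ∈ Icc u s, dist (zbar x) (y x) ≤ 2 * η) ∧
      (∀ x ∈ Ioc u s, HasDerivWithinAt y (y' x) (Iic x) x) ∧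
      ∀ x ∈ Ioc u s, dist (y' x) (q (y x)) ≤ K * (3 * η) := by
  have mem_mesh {x : ℝ} (hx : x ∈ Icc u s) : x ∈ Ioc (t N) (t M) :=
    ⟨hu.trans_le hx.1, hx.2.trans hs⟩
  obtain ⟨Y, hY⟩ := IsLinearInterpolation.exists_of_strictMono ht (eulerSum t (q ∘ z))
  let y (x : ℝ) : E := Y x + (zbar - Y) s
  have dist_zbar_y {x : ℝ} (hx : x ∈ Icc u s) : dist (zbar x) (y x) ≤ 2 * η := calc
    dist (zbar x) (y x) = dist ((zbar - Y) x) ((zbar - Y) s) := by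
      simp only [y, dist_eq_norm, Pi.sub_apply, sub_add_eq_sub_sub]
    _ ≤ 2 * η :=
      (hzbar.sub hY).dist_le_two_mul_of_dist_node_le ht.monotone hres (mem_mesh hx)
        (mem_mesh (right_mem_Icc.2 hus))
  have exists_node (x : ℝ) (hx : x ∈ Ioc u s) : ∃ n ≥ N, x ∈ Ioc (t n) (t (n + 1)) :=
    exists_mem_Ioc_of_monotone ht.monotone (mem_mesh (Ioc_subset_Icc_self hx))
  choose! node le_node mem_node using exists_node
  have dist_node_y {x : ℝ} (hx : x ∈ Ioc u s) : dist (z (node x)) (y x) ≤ 3 * η := calc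
    dist (z (node x)) (y x) ≤ dist (z (node x)) (zbar x) + dist (zbar x) (y x) :=
      dist_triangle _ _ _
    _ ≤ η + 2 * η := by
      gcongr
      · rw [dist_comm]
        exact (hzbar.dist_node_le (Ioc_subset_Icc_self (mem_node x hx))).trans
          (hstep _ (le_node x hx))
      · exact dist_zbar_y (Ioc_subset_Icc_self hx)
    _ = 3 * η := by ring
  refine ⟨y, fun x ↦ q (z (node x)), add_sub_cancel _ _, ?_, fun x ↦ dist_zbar_y, ?_, ?_⟩
  · exact ((hY.continuousOn ht.monotone M).mono fun x hx ↦
      ⟨(ht.monotone N.zero_le).trans (mem_mesh hx).1.le, (mem_mesh hx).2⟩).add continuousOn_const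
  · exact fun x hx ↦ (hY.hasDerivWithinAt_eulerSum (mem_node x hx)).add_const _
  · exact fun x hx ↦ hq.dist_le_mul_of_le (dist_node_y hx)

theorem IsLinearInterpolation.dist_solution_le (ht : StrictMono t)
    (hzbar : IsLinearInterpolation t z zbar) (hq : LipschitzWith K q)
    (hres : ∀ n ≥ N, dist ((z - eulerSum t (q ∘ z)) n) c ≤ η)
    (hstep : ∀ n ≥ N, dist (z (n + 1)) (z n) ≤ η) (hu : t N < u) (hus : u ≤ s) (hs : s ≤ t M)
    {w : ℝ → E} (hw : ContinuousOn w (Icc u s))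
    (hw' : ∀ x ∈ Ioc u s, HasDerivWithinAt w (q (w x)) (Iic x) x) (hws : w s = zbar s) :
    dist (zbar u) (w u) ≤ 3 * η * Real.exp (K * (s - u)) := by
  obtain ⟨y, y', hys, hy, dist_zbar_y, hy', dist_y'⟩ :=
    hzbar.exists_approx_trajectory ht hq hres hstep hu hus hs
  have dist_y_w : dist (y u) (w u) ≤ 3 * η * (Real.exp (K * (s - u)) - 1) := by
    rw [← gronwallBound_zero_mul, ← add_zero ((K : ℝ) * (3 * η))]
    exact dist_le_of_approx_trajectories_ODE_left (fun _ ↦ hq) hy hy' dist_y' hw hw'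
      (fun x _ ↦ (dist_self _).le) (by rw [hys, hws, dist_self]) u (left_mem_Icc.2 hus)
  have η_nonneg : 0 ≤ η := dist_nonneg.trans (hstep N le_rfl)
  calc dist (zbar u) (w u)
      ≤ dist (zbar u) (y u) + dist (y u) (w u) := dist_triangle _ _ _
    _ ≤ 2 * η + 3 * η * (Real.exp (K * (s - u)) - 1) :=
        add_le_add (dist_zbar_y u (left_mem_Icc.2 hus)) dist_y_w
    _ ≤ 3 * η * Real.exp (K * (s - u)) := by linarith

end Tracking

lemma tendsto_zero_of_summable_sq {a : ℕ → ℝ} (ha : Summable fun n ↦ a n ^ 2) :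
    Tendsto a atTop (𝓝 0) := by
  rw [tendsto_zero_iff_abs_tendsto_zero]
  simpa [Function.comp_def, Real.sqrt_sq_eq_abs] using ha.tendsto_atTop_zero.sqrt

lemma tendsto_smul_comp_of_lipschitzWith {ι F G : Type*} [SeminormedAddCommGroup F]
    [SeminormedAddCommGroup G] [NormedSpace ℝ G] {l : Filter ι} {a : ι → ℝ}
    (ha : Tendsto a l (𝓝 0)) {q : F → G} {K : ℝ≥0} (hq : LipschitzWith K q) {z : ι → F}
    (hz : ∃ C, ∀ i, ‖z i‖ ≤ C) : Tendsto (fun i ↦ a i • q (z i)) l (𝓝 0) := by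
  obtain ⟨C, hC⟩ := hz
  have norm_le (i : ι) : ‖q (z i)‖ ≤ K * C + ‖q 0‖ := calc
    ‖q (z i)‖ ≤ ‖q (z i) - q 0‖ + ‖q 0‖ := norm_le_norm_sub_add _ _
    _ ≤ K * ‖z i - 0‖ + ‖q 0‖ := by gcongr; exact hq.norm_sub_le _ _
    _ ≤ K * C + ‖q 0‖ := by rw [sub_zero]; gcongr; exact hC i
  exact ha.zero_smul_isBoundedUnder_le (isBoundedUnder_of ⟨_, norm_le⟩)

lemma exists_forall_ge_dist_residual_le_and_dist_step_le {t : ℕ → ℝ} {z p : ℕ → E}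
    (hdrift : Tendsto (fun n ↦ (t (n + 1) - t n) • p n) atTop (𝓝 0))
    (hres : ∀ ε > 0, ∃ N, ∀ n ≥ N, ∀ k,
      ‖z (n + k) - z n - ∑ j ∈ Finset.range k, (t (n + j + 1) - t (n + j)) • p (n + j)‖ ≤ ε)
    {η : ℝ} (hη : 0 < η) :
    ∃ N, (∀ n ≥ N, dist ((z - eulerSum t p) n) ((z - eulerSum t p) N) ≤ η) ∧
      ∀ n ≥ N, dist (z (n + 1)) (z n) ≤ η := by
  obtain ⟨N, bounds⟩ := eventually_atTop.1 ((eventually_atTop.2 (hres (η / 2) (half_pos hη))).and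
    (hdrift.norm.eventually_le_const (norm_zero.trans_lt (half_pos hη))))
  refine ⟨N, fun n hn ↦ ?_, fun n hn ↦ ?_⟩
  · obtain ⟨k, rfl⟩ := Nat.exists_eq_add_of_le hn
    rw [dist_eq_norm, sub_eulerSum_add_sub]
    exact ((bounds N le_rfl).1 k).trans (half_le_self hη.le)
  · have one_step : ‖z (n + 1) - z n - (t (n + 1) - t n) • p n‖ ≤ η / 2 := by
      simpa only [sum_range_one, add_zero] using (bounds n hn).1 1
    rw [dist_eq_norm]
    linarith [(bounds n hn).2,
      norm_le_norm_sub_add (z (n + 1) - z n) ((t (n + 1) - t n) • p n)]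

theorem fedgan_theorem1_backward_general
    {a : ℕ → ℝ} (ha : ∀ n, 0 < a n) (hdiv : ¬ Summable a)
    {t : ℕ → ℝ} (ht : ∀ n, t n = ∑ m ∈ Finset.range n, a m)
    {z : ℕ → E} {zbar : ℝ → E} (hzbar : IsLinearInterpolation t z zbar)
    {q : E → E} {K : ℝ≥0} (hq : LipschitzWith K q)
    {zsol : ℝ → ℝ → E} (hfinal : ∀ s, 0 ≤ s → zsol s s = zbar s)
    (hode : ∀ s, 0 ≤ s → ∀ u, u ≤ s → HasDerivWithinAt (zsol s) (q (zsol s u)) (Iic s) u)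
    (hdrift : Tendsto (fun n ↦ a n • q (z n)) atTop (𝓝 0))
    (hres : ∀ ε > 0, ∃ N, ∀ n ≥ N, ∀ k,
      ‖z (n + k) - z n - ∑ j ∈ Finset.range k, a (n + j) • q (z (n + j))‖ ≤ ε)
    (T : ℝ) : ∀ ε > 0, ∃ S : ℝ, 0 ≤ S ∧ ∀ s ≥ S,
      ∀ u ∈ Icc (max 0 (s - T)) s, ‖zbar u - zsol s u‖ ≤ ε := by
  obtain rfl : a = fun n ↦ t (n + 1) - t n := by
    ext n
    rw [ht, ht, sum_range_succ, add_sub_cancel_left]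
  have t_strictMono : StrictMono t := strictMono_nat_of_lt_succ fun n ↦ sub_pos.1 (ha n)
  have t_tendsto : Tendsto t atTop atTop :=
    ((not_summable_iff_tendsto_nat_atTop_of_nonneg fun n ↦ (ha n).le).1 hdiv).congr
      fun n ↦ (ht n).symm
  intro ε hε
  obtain ⟨N, residual_le, step_le⟩ :=
    exists_forall_ge_dist_residual_le_and_dist_step_le (p := q ∘ z) hdrift hres
      (η := ε / (3 * Real.exp (K * T))) (by positivity)
  refine ⟨max 0 (t (N + 1) + T), le_max_left _ _, fun s hs u hu ↦ ?_⟩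
  have hs₀ : 0 ≤ s := (le_max_left _ _).trans hs
  have u_ge : s - T ≤ u := (le_max_right _ _).trans hu.1
  have u_gt : t N < u := by
    linarith [t_strictMono N.lt_succ_self, (le_max_right 0 (t (N + 1) + T)).trans hs]
  obtain ⟨M, s_le⟩ := (t_tendsto.eventually_ge_atTop s).exists
  calc ‖zbar u - zsol s u‖
      ≤ 3 * (ε / (3 * Real.exp (K * T))) * Real.exp (K * (s - u)) := by
        rw [← dist_eq_norm]
        exact hzbar.dist_solution_le t_strictMono hq residual_le step_le u_gt hu.2 s_le
          (fun x hx ↦ ((hode s hs₀ x hx.2).mono Icc_subset_Iic_self).continuousWithinAt)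
          (fun x hx ↦ (hode s hs₀ x hx.2).mono (Iic_subset_Iic.2 hx.2)) (hfinal s hs₀)
    _ ≤ 3 * (ε / (3 * Real.exp (K * T))) * Real.exp (K * T) := by
        gcongr
        linarith
    _ = ε := by field_simp

end

/-- Backward half of Theorem 1 of the FedGAN paper (pathwise stochastic approximation):
if the iterates are bounded and the accumulated residuals relative to the Euler scheme
for the `L`-Lipschitz vector field `q` vanish, then the piecewise linear interpolation
`zbar` of the iterates asymptotically tracks, over any horizon `T`, the backward solution
of the limiting ODE ending at the interpolated trajectory. -/
theorem fedgan_theorem1_backward {d : ℕ}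
    (a : ℕ → ℝ) (ha : ∀ n, 0 < a n)
    (hdiv : ¬ Summable a) (hsq : Summable fun n => (a n) ^ 2)
    (t : ℕ → ℝ) (ht : ∀ n, t n = ∑ m ∈ Finset.range n, a m)
    (z : ℕ → EuclideanSpace ℝ (Fin d))
    (zbar : ℝ → EuclideanSpace ℝ (Fin d))
    (hzbar : ∀ n, ∀ s ∈ Set.Icc (t n) (t (n + 1)),
      zbar s = z n + ((s - t n) / (t (n + 1) - t n)) • (z (n + 1) - z n))
    (q : EuclideanSpace ℝ (Fin d) → EuclideanSpace ℝ (Fin d))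
    (L : ℝ) (hL : 0 ≤ L) (hq : ∀ x y, ‖q x - q y‖ ≤ L * ‖x - y‖)
    (zsol : ℝ → ℝ → EuclideanSpace ℝ (Fin d))
    (hfinal : ∀ s, 0 ≤ s → zsol s s = zbar s)
    (hode : ∀ s, 0 ≤ s → ∀ u, u ≤ s →
      HasDerivWithinAt (zsol s) (q (zsol s u)) (Set.Iic s) u)
    (hbd : ∃ C, ∀ n, ‖z n‖ ≤ C)
    (hres : ∀ ε > 0, ∃ N, ∀ n ≥ N, ∀ k,
      ‖z (n + k) - z n - ∑ j ∈ Finset.range k, a (n + j) • q (z (n + j))‖ ≤ ε) :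
    ∀ T > 0, ∀ ε > 0, ∃ S : ℝ, 0 ≤ S ∧ ∀ s ≥ S,
      ∀ u ∈ Set.Icc (max 0 (s - T)) s, ‖zbar u - zsol s u‖ ≤ ε := by
  have hq_lipschitz : LipschitzWith ⟨L, hL⟩ q := .of_dist_le_mul fun x y ↦ by
    rw [dist_eq_norm, dist_eq_norm]
    exact hq x y
  exact fun T _ ↦ fedgan_theorem1_backward_general ha hdiv ht hzbar hq_lipschitz hfinal hode
    (tendsto_smul_comp_of_lipschitzWith (tendsto_zero_of_summable_sq hsq) hq_lipschitz hbd) hres T
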